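/- Let w ∈ 𝒲(J₁,J₂), and consider the action of the group W_{J₂} × W_{J₂} × W_{J₁} on W given by (a, b, c) · x = a c x c⁻¹ b⁻¹ (a well-defined group action since every element of W_{J₁} commutes with every element of W_{J₂}). Then for v, v' ∈ W_{I(J₁,w)}, the elements w v and w v' lie in the same orbit of this action if and only if v' = (w⁻¹ u w) v u⁻¹ for some u ∈ W_{I(J₁,w)} (i.e. v and v' are Ad(w)-twisted conjugate in W_{I(J₁,w)}); moreover every orbit of this action contained in W_{J₂} π⁻¹(w) W_{J₂} contains w v for some v ∈ W_{I(J₁,w)}. Hence v ↦ (orbit of w v) induces a bijection from the set of Ad(w)-twisted conjugacy classes of W_{I(J₁,w)} onto the set of orbits of this action contained in W_{J₂} π⁻¹(w) W_{J₂}. -/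

import Mathlib

open CoxeterSystem

variable {B : Type*} [Finite B] {W : Type*} [Group W] {M : CoxeterMatrix B}

namespace PartialConjugation

/-- The standard parabolic subgroup `W_J` of `W`, generated by the simple
reflections indexed by `J`. -/
def parab (cs : CoxeterSystem M W) (J : Set B) : Subgroup W :=
  Subgroup.closure (cs.simple '' J)

/-- `w ∈ W^J`: `w` is a minimal length representative of its left coset `w W_J`. -/
def IsMinRep (cs : CoxeterSystem M W) (J : Set B) (w : W) : Prop :=
  ∀ v ∈ parab cs J, cs.length w ≤ cs.length (w * v)

variable (cs : CoxeterSystem M W) (J₁ J₂ : Set B)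

/-- `K` is a `w`-special subset of `J₁` (for untwisted partial conjugation). -/
def WSpecial (w : W) (K : Set B) : Prop :=
  K ⊆ J₁ ∧ ∀ k ∈ K, ∃ j ∈ K, w * cs.simple k * w⁻¹ = cs.simple j

/-- The set `I(J₁, w)`: the union of all `w`-special subsets of `J₁`. -/
def Iset (w : W) : Set B := ⋃₀ {K | WSpecial cs J₁ w K}

/-- The fiber `π⁻¹(w) = {u x u⁻¹ : u ∈ W_{J₁}, x ∈ w W_{I(J₁,w)}}` of the
partial conjugation decomposition. -/
def fiber (w : W) : Set W :=
  {y | ∃ u ∈ parab cs J₁, ∃ v ∈ parab cs (Iset cs J₁ w), y = u * (w * v) * u⁻¹}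

/-- The sets `K_i(w)`: `K_0(w) = J₂` and
`K_i(w) = {j ∈ J₁ : w s_k w⁻¹ = s_j for some k ∈ K_{i-1}(w)}`. -/
def Kseq (w : W) : ℕ → Set B
  | 0 => J₂
  | i + 1 => {j ∈ J₁ | ∃ k ∈ Kseq w i, w * cs.simple k * w⁻¹ = cs.simple j}

/-- The set `𝒲(J₁, J₂)`: elements `w ∈ W^{J₁}` that are minimal length
elements of the cosets `W_{K_i(w)} w` for all `i ≥ 0`. -/
def calW : Set W :=
  {w | IsMinRep cs J₁ w ∧
    ∀ i : ℕ, ∀ u ∈ parab cs (Kseq cs J₁ J₂ w i),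
      cs.length w ≤ cs.length (u * w)}

/-- The set `W_{J₂} π⁻¹(w) W_{J₂}`. -/
def dSet (w : W) : Set W :=
  {y | ∃ a ∈ parab cs J₂, ∃ b ∈ parab cs J₂, ∃ x ∈ fiber cs J₁ w,
    y = a * x * b}

/-- The orbit of `x` under the action `(a, b, c) · x = a c x c⁻¹ b⁻¹` of
`W_{J₂} × W_{J₂} × W_{J₁}` on `W`. -/
def orbAct (x : W) : Set W :=
  {y | ∃ a ∈ parab cs J₂, ∃ b ∈ parab cs J₂, ∃ c ∈ parab cs J₁,
    y = a * c * x * c⁻¹ * b⁻¹}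

/-- `v` and `v'` are `Ad(w)`-twisted conjugate in `W_{I(J₁,w)}`:
`v' = (w⁻¹ u w) v u⁻¹` for some `u ∈ W_{I(J₁,w)}`. -/
def AdTwConj (w v v' : W) : Prop :=
  ∃ u ∈ parab cs (Iset cs J₁ w), v' = (w⁻¹ * u * w) * v * u⁻¹

set_option linter.unusedSectionVars false

namespace CoxAux

open CoxeterSystem


section geometric

open Module Polynomial

noncomputable def gform (M : CoxeterMatrix B) (i : B) : Module.Dual ℝ (B →₀ ℝ) :=
  Finsupp.lsum ℝ (fun j => (LinearMap.id : ℝ →ₗ[ℝ] ℝ).smulRight (-2 * Real.cos (Real.pi / M i j)))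

lemma gform_single (M : CoxeterMatrix B) (i j : B) :
    gform M i (Finsupp.single j 1) = -2 * Real.cos (Real.pi / M i j) := by
  simp [gform]

lemma gform_self (M : CoxeterMatrix B) (i : B) : gform M i (Finsupp.single i 1) = 2 := by
  rw [gform_single]; simp

noncomputable def grefl (M : CoxeterMatrix B) (i : B) : (B →₀ ℝ) ≃ₗ[ℝ] (B →₀ ℝ) :=
  Module.reflection (gform_self M i)

lemma S_even (m p : ℕ) (hp : m = 2 * p) (hm : 3 ≤ m) :
    (Chebyshev.S ℝ ((p : ℤ) - 1)).eval (2 * Real.cos (2 * Real.pi / m)) = 0 := by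
  have h := Chebyshev.S_two_mul_real_cos (2 * Real.pi / m) ((p : ℤ) - 1)
  have hs : Real.sin (2 * Real.pi / m) ≠ 0 := by
    apply ne_of_gt
    have hm' : (3 : ℝ) ≤ m := by exact_mod_cast hm
    apply Real.sin_pos_of_pos_of_lt_pi
    · have := Real.pi_pos; positivity
    · rw [div_lt_iff₀ (by linarith)]
      nlinarith [Real.pi_pos]
  have e : (((p : ℤ) - 1 : ℤ) + 1 : ℝ) * (2 * Real.pi / m) = Real.pi := by
    have hm' : (3 : ℝ) ≤ m := by exact_mod_cast hm
    have : (m : ℝ) = 2 * p := by exact_mod_cast hp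
    push_cast
    have hp0 : (p : ℝ) ≠ 0 := by
      intro h0; rw [h0] at this; linarith
    rw [this]; field_simp; ring
  rw [e, Real.sin_pi] at h
  exact (mul_eq_zero.mp h).resolve_right hs

lemma S_odd (m p : ℕ) (hp : m = 2 * p + 1) (hm : 3 ≤ m) :
    (Chebyshev.S ℝ (p : ℤ)).eval (2 * Real.cos (2 * Real.pi / m)) +
    (Chebyshev.S ℝ ((p : ℤ) - 1)).eval (2 * Real.cos (2 * Real.pi / m)) = 0 := by
  have h := Chebyshev.S_two_mul_real_cos (2 * Real.pi / m) ((p : ℤ) - 1)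
  have h' := Chebyshev.S_two_mul_real_cos (2 * Real.pi / m) (p : ℤ)
  have hm' : (3 : ℝ) ≤ m := by exact_mod_cast hm
  have hs : Real.sin (2 * Real.pi / m) ≠ 0 := by
    apply ne_of_gt
    apply Real.sin_pos_of_pos_of_lt_pi
    · have := Real.pi_pos; positivity
    · rw [div_lt_iff₀ (by linarith)]
      nlinarith [Real.pi_pos]
  have e : (((p : ℤ) : ℝ) + 1) * (2 * Real.pi / m) =
      2 * Real.pi - (((p : ℤ) - 1 : ℤ) + 1 : ℝ) * (2 * Real.pi / m) := by
    have : (m : ℝ) = 2 * p + 1 := by exact_mod_cast hp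
    push_cast
    have hp0 : (2 * p + 1 : ℝ) ≠ 0 := by positivity
    rw [this]; field_simp; ring
  rw [e, Real.sin_two_pi_sub] at h'
  have : ((Chebyshev.S ℝ (p : ℤ)).eval (2 * Real.cos (2 * Real.pi / m)) +
    (Chebyshev.S ℝ ((p : ℤ) - 1)).eval (2 * Real.cos (2 * Real.pi / m))) *
      Real.sin (2 * Real.pi / m) = 0 := by
    rw [add_mul, h, h']; ring
  exact (mul_eq_zero.mp this).resolve_right hs

lemma grefl_liftable (M : CoxeterMatrix B) : M.IsLiftable (grefl M) := by
  intro i j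
  rcases eq_or_ne i j with rfl | hij
  · rw [M.diagonal]
    ext1 z
    simp [grefl, Module.involutive_reflection (gform_self M i) _]
  have hm1 : M i j ≠ 1 := M.off_diagonal i j hij
  rcases Nat.eq_zero_or_pos (M i j) with h0 | hpos
  · rw [h0, pow_zero]
  have hsym : M j i = M i j := M.symmetric j i
  ext1 z
  have key := Module.reflection_mul_reflection_pow_apply (gform_self M i) (gform_self M j)
    (M i j) z (2 * Real.cos (2 * Real.pi / M i j)) (by
      rw [gform_single, gform_single, hsym, mul_div_assoc, Real.cos_two_mul]; ring)
  change ((Module.reflection (gform_self M i) * Module.reflection (gform_self M j)) ^ (M i j)) z = z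
  rw [key]
  rw [gform_single, gform_single, hsym]
  generalize hmm : M i j = m at *
  rcases Nat.lt_or_ge m 3 with hlt | hge
  · have : m = 2 := by omega
    subst this
    norm_num
    module
  · rcases Nat.even_or_odd' m with ⟨p, hp | hp⟩
    · have e1 : ((m : ℤ) - 2) / 2 = (p : ℤ) - 1 := by omega
      have e2 : ((m : ℤ) - 1) / 2 = (p : ℤ) - 1 := by omega
      rw [e1, e2, S_even m p hp hge]
      simp
    · have e1 : ((m : ℤ) - 2) / 2 = (p : ℤ) - 1 := by omega
      have e2 : ((m : ℤ) - 1) / 2 = (p : ℤ) := by omega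
      have e3 : ((m : ℤ) - 3) / 2 = (p : ℤ) - 1 := by omega
      have e4 : ((m : ℤ)) / 2 = (p : ℤ) := by omega
      rw [e1, e2, e3, e4, S_odd m p hp hge]
      simp

theorem simple_inj {i j : B} (h : cs.simple i = cs.simple j) : i = j := by
  by_contra hij
  have h1 := cs.lift_apply_simple (grefl_liftable M) i
  have h2 := cs.lift_apply_simple (grefl_liftable M) j
  rw [h, h2] at h1
  have h3 := congrArg (fun f => (f (Finsupp.single i 1)) i) h1
  simp only [grefl, Module.reflection_apply, gform_self] at h3
  simp [hij] at h3
  norm_num at h3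

end geometric

section exchange

open Classical in
noncomputable def permFun (i : B) (p : W × ZMod 2) : W × ZMod 2 :=
  (cs.simple i * p.1 * cs.simple i, p.2 + if p.1 = cs.simple i then 1 else 0)

lemma permFun_invol (i : B) : Function.Involutive (permFun cs i) := by
  rintro ⟨t, e⟩
  have h1 : (cs.simple i * t * cs.simple i = cs.simple i) ↔ t = cs.simple i := by
    constructor
    · intro h
      have : t = cs.simple i * (cs.simple i * t * cs.simple i) * cs.simple i := by
        simp [mul_assoc]
      rw [this, h]; simp
    · rintro rfl; simp
  by_cases ht : t = cs.simple i
  · have ht' := h1.mpr ht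
    have h2 : (1 + 1 : ZMod 2) = 0 := by decide
    simp [permFun, ht, add_assoc, h2]
  · have hp : ∀ t, t ≠ cs.simple i →
        permFun cs i (t, e) = (cs.simple i * t * cs.simple i, e) := by
      intro t ht
      simp [permFun, ht]
    rw [hp t ht, hp _ (fun h => ht (h1.mp h))]
    simp [mul_assoc]

noncomputable def permE (i : B) : Equiv.Perm (W × ZMod 2) := (permFun_invol cs i).toPerm

open Classical in
lemma permE_apply (i : B) (t : W) (e : ZMod 2) : permE cs i (t, e) =
  (cs.simple i * t * cs.simple i, e + if t = cs.simple i then 1 else 0) := rfl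

lemma sx_pow (i j : B) (k : ℕ) : cs.simple j * (cs.simple i * cs.simple j) ^ k =
    ((cs.simple i * cs.simple j) ^ k)⁻¹ * cs.simple j := by
  induction k with
  | zero => simp
  | succ k ih =>
    calc cs.simple j * (cs.simple i * cs.simple j) ^ (k + 1)
        = (cs.simple j * (cs.simple i * cs.simple j) ^ k) * (cs.simple i * cs.simple j) := by
          rw [pow_succ, mul_assoc]
      _ = _ := by
          rw [ih, pow_succ', mul_inv_rev]
          simp [mul_assoc]

open Classical in
lemma permE_pow (i j : B) (k : ℕ) (t : W) (e : ZMod 2) :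
    ((permE cs i * permE cs j) ^ k) (t, e) =
      ((cs.simple i * cs.simple j) ^ k * t * ((cs.simple i * cs.simple j) ^ k)⁻¹,
        e + ∑ r ∈ Finset.range (2 * k),
          if t = cs.simple j * (cs.simple i * cs.simple j) ^ r then 1 else 0) := by
  induction k with
  | zero => simp
  | succ k ih =>
    rw [pow_succ', Equiv.Perm.mul_apply, ih, Equiv.Perm.mul_apply, permE_apply, permE_apply]
    have hx := sx_pow cs i j k
    have e0 : cs.simple j * (cs.simple i * cs.simple j) ^ (2 * k) =
        ((cs.simple i * cs.simple j) ^ k)⁻¹ * cs.simple j * (cs.simple i * cs.simple j) ^ k := by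
      rw [two_mul, pow_add, ← mul_assoc, hx]
    have e1 : cs.simple j * (cs.simple i * cs.simple j) ^ (2 * k + 1) =
        ((cs.simple i * cs.simple j) ^ k)⁻¹ * cs.simple j * cs.simple i * cs.simple j *
          (cs.simple i * cs.simple j) ^ k := by
      rw [show 2 * k + 1 = k + (1 + k) by ring, pow_add, pow_add, ← mul_assoc, hx]
      simp [mul_assoc]
    refine Prod.ext ?_ ?_
    · simp only [pow_succ', mul_inv_rev, inv_simple]
      simp [mul_assoc]
    · simp only
      rw [show 2 * (k + 1) = 2 * k + 1 + 1 by ring, Finset.sum_range_succ, Finset.sum_range_succ,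
        e0, e1]
      have c0 : ((cs.simple i * cs.simple j) ^ k * t * ((cs.simple i * cs.simple j) ^ k)⁻¹ =
          cs.simple j) ↔ t = ((cs.simple i * cs.simple j) ^ k)⁻¹ * cs.simple j *
            (cs.simple i * cs.simple j) ^ k := by
        generalize (cs.simple i * cs.simple j) ^ k = y
        constructor
        · intro h; rw [← h]; group
        · intro h; rw [h]; group
      have c1 : (cs.simple j * ((cs.simple i * cs.simple j) ^ k * t *
          ((cs.simple i * cs.simple j) ^ k)⁻¹) * cs.simple j =
          cs.simple i) ↔ t = ((cs.simple i * cs.simple j) ^ k)⁻¹ * cs.simple j * cs.simple i *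
            cs.simple j * (cs.simple i * cs.simple j) ^ k := by
        generalize (cs.simple i * cs.simple j) ^ k = y
        constructor
        · intro h; rw [← h]; simp [mul_assoc]
        · intro h; rw [h]; simp [mul_assoc]
      simp only [c0, c1]
      ring

lemma permE_liftable : M.IsLiftable (permE cs) := by
  classical
  intro i j
  ext1 ⟨t, e⟩
  rw [permE_pow, cs.simple_mul_simple_pow]
  refine Prod.ext (by simp) ?_
  simp only [Equiv.Perm.coe_one, id_eq]
  rw [two_mul, Finset.sum_range_add]
  have : ∀ r, (cs.simple i * cs.simple j) ^ (M i j + r) = (cs.simple i * cs.simple j) ^ r := by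
    intro r; rw [pow_add, cs.simple_mul_simple_pow, one_mul]
  simp only [this]
  rw [CharTwo.add_self_eq_zero, add_zero]

noncomputable def permHom : W →* Equiv.Perm (W × ZMod 2) := cs.lift ⟨permE cs, permE_liftable cs⟩

lemma permHom_simple (i : B) : permHom cs (cs.simple i) = permE cs i :=
  cs.lift_apply_simple (permE_liftable cs) i

open Classical in
lemma permHom_word (ω : List B) (t : W) (e : ZMod 2) :
    permHom cs (cs.wordProd ω) (t, e) =
      (cs.wordProd ω * t * (cs.wordProd ω)⁻¹, e + ((cs.rightInvSeq ω).count t : ZMod 2)) := by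
  induction ω with
  | nil => simp
  | cons i ω ih =>
    rw [wordProd_cons, map_mul, Equiv.Perm.mul_apply, ih, permHom_simple, permE_apply]
    refine Prod.ext ?_ ?_
    · simp [mul_assoc]
    · simp only [rightInvSeq, List.count_cons]
      have : (cs.wordProd ω * t * (cs.wordProd ω)⁻¹ = cs.simple i) ↔
          ((cs.wordProd ω)⁻¹ * cs.simple i * cs.wordProd ω = t) := by
        constructor
        · intro h; rw [← h]; group
        · intro h; rw [← h]; group
      simp only [this, beq_iff_eq]
      push_cast
      ring

theorem exchange (ω : List B) (i : B)
    (h : cs.length (cs.wordProd ω * cs.simple i) < cs.length (cs.wordProd ω)) :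
    ∃ k, k < ω.length ∧ cs.wordProd ω * cs.simple i = cs.wordProd (ω.eraseIdx k) := by
  classical
  by_cases hmem : cs.simple i ∈ cs.rightInvSeq ω
  · obtain ⟨k, hk, hk'⟩ := List.mem_iff_getElem.mp hmem
    refine ⟨k, by simpa using hk, ?_⟩
    rw [← cs.wordProd_mul_getD_rightInvSeq, List.getD_eq_getElem _ _ hk, hk']
  · exfalso
    obtain ⟨τ, hτ, hτ'⟩ := cs.exists_isReduced (cs.wordProd ω * cs.simple i)
    have h1 := permHom_word cs τ (cs.simple i) 0
    rw [← hτ', map_mul, Equiv.Perm.mul_apply, permHom_simple, permE_apply, permHom_word] at h1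
    have h2 := congrArg Prod.snd h1
    simp only [simple_mul_simple_self, one_mul, List.count_eq_zero_of_not_mem hmem] at h2
    have h3 : cs.simple i ∈ cs.rightInvSeq τ := by
      by_contra hn
      rw [List.count_eq_zero_of_not_mem hn] at h2
      simp at h2
    have h4 := (cs.isRightInversion_of_mem_rightInvSeq hτ h3).2
    rw [← hτ'] at h4
    simp at h4
    omega

end exchange
end CoxAux
set_option linter.unusedSectionVars false
section Parabolic

open CoxAux

/-- `w` has no right descents in `K`. -/
def RMin (K : Set B) (w : W) : Prop := ∀ k ∈ K, cs.length w < cs.length (w * cs.simple k)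

/-- `w` has no left descents in `K`. -/
def LMin (K : Set B) (w : W) : Prop := ∀ k ∈ K, cs.length w < cs.length (cs.simple k * w)

lemma lmin_iff {K : Set B} {w : W} : LMin cs K w ↔ RMin cs K w⁻¹ := by
  have h : ∀ k, cs.length (w⁻¹ * cs.simple k) = cs.length (cs.simple k * w) := by
    intro k
    rw [← cs.length_inv]
    simp
  simp [LMin, RMin, h]

lemma simple_mem {K : Set B} {k : B} (hk : k ∈ K) : cs.simple k ∈ parab cs K :=
  Subgroup.subset_closure ⟨k, hk, rfl⟩

lemma parab_mono {K K' : Set B} (h : K ⊆ K') : parab cs K ≤ parab cs K' :=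
  Subgroup.closure_mono (Set.image_mono h)

lemma word_mem {K : Set B} (ω : List B) (h : ∀ k ∈ ω, k ∈ K) : cs.wordProd ω ∈ parab cs K := by
  induction ω with
  | nil => simp [one_mem]
  | cons i ω ih =>
    rw [wordProd_cons]
    exact mul_mem (simple_mem cs (h i (by simp))) (ih (fun k hk => h k (by simp [hk])))

lemma exists_word {K : Set B} {u : W} (hu : u ∈ parab cs K) :
    ∃ ω : List B, (∀ k ∈ ω, k ∈ K) ∧ cs.wordProd ω = u := by
  induction hu using Subgroup.closure_induction with
  | mem x hx => obtain ⟨k, hk, rfl⟩ := hx; exact ⟨[k], by simpa using hk, by simp⟩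
  | one => exact ⟨[], by simp, by simp⟩
  | mul x y _ _ hx hy =>
    obtain ⟨ω, h1, rfl⟩ := hx
    obtain ⟨τ, h2, rfl⟩ := hy
    refine ⟨ω ++ τ, ?_, by rw [wordProd_append]⟩
    intro k hk
    rcases List.mem_append.mp hk with h | h
    · exact h1 k h
    · exact h2 k h
  | inv x _ hx =>
    obtain ⟨ω, h1, rfl⟩ := hx
    exact ⟨ω.reverse, by simpa using h1, by simp⟩

lemma exists_red_of_word {K : Set B} (ω : List B) (h : ∀ k ∈ ω, k ∈ K) :
    ∃ τ : List B, (∀ k ∈ τ, k ∈ K) ∧ cs.wordProd τ = cs.wordProd ω ∧ cs.IsReduced τ := by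
  induction ω using List.reverseRecOn with
  | nil => exact ⟨[], by simp, rfl, by simp [CoxeterSystem.IsReduced]⟩
  | append_singleton ω i ih =>
    obtain ⟨τ, h1, h2, h3⟩ := ih (fun k hk => h k (by simp [hk]))
    have hi : i ∈ K := h i (by simp)
    have e : cs.wordProd (ω ++ [i]) = cs.wordProd τ * cs.simple i := by
      rw [wordProd_append, h2]; simp
    rcases cs.length_mul_simple (cs.wordProd τ) i with hl | hl
    · refine ⟨τ ++ [i], ?_, ?_, ?_⟩
      · intro k hk
        rcases List.mem_append.mp hk with h | h
        · exact h1 k h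
        · simp at h; rw [h]; exact hi
      · rw [e, wordProd_append]; simp
      · unfold CoxeterSystem.IsReduced at *
        rw [wordProd_append, wordProd_singleton, hl, h3]; simp
    · obtain ⟨k, hk, hk'⟩ := exchange cs τ i (by omega)
      refine ⟨τ.eraseIdx k, fun j hj => h1 j (List.mem_of_mem_eraseIdx hj), ?_, ?_⟩
      · rw [e, hk']
      · unfold CoxeterSystem.IsReduced at *
        rw [← hk', List.length_eraseIdx_of_lt hk]
        omega

lemma exists_red {K : Set B} {u : W} (hu : u ∈ parab cs K) :
    ∃ τ : List B, (∀ k ∈ τ, k ∈ K) ∧ cs.wordProd τ = u ∧ cs.IsReduced τ := by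
  obtain ⟨ω, h, rfl⟩ := exists_word cs hu
  exact exists_red_of_word cs ω h

lemma mem_of_simple_mem {K : Set B} {j : B} (h : cs.simple j ∈ parab cs K) : j ∈ K := by
  obtain ⟨τ, h1, h2, h3⟩ := exists_red cs h
  have h4 : τ.length = 1 := by rw [← h3.eq, h2, length_simple]
  obtain ⟨k, rfl⟩ := List.length_eq_one_iff.mp h4
  rw [wordProd_singleton] at h2
  rw [← simple_inj cs h2]
  exact h1 k (by simp)

lemma add_of_min {K : Set B} {w : W} (h : ∀ v ∈ parab cs K, cs.length w ≤ cs.length (w * v))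
    {u : W} (hu : u ∈ parab cs K) : cs.length (w * u) = cs.length w + cs.length u := by
  obtain ⟨ω, h1, rfl, h3⟩ := exists_red cs hu
  clear hu
  induction ω using List.reverseRecOn with
  | nil => simp
  | append_singleton ω i ih =>
    have hr : cs.IsReduced ω := by
      have := h3.take ω.length
      simpa using this
    have ih' := ih (fun k hk => h1 k (by simp [hk])) hr
    have hi : i ∈ K := h1 i (by simp)
    have hω : cs.wordProd ω ∈ parab cs K := word_mem cs ω (fun k hk => h1 k (by simp [hk]))
    have e3 : cs.length (cs.wordProd (ω ++ [i])) = cs.length (cs.wordProd ω) + 1 := by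
      rw [h3.eq, hr.eq]; simp
    rw [e3]
    rw [wordProd_append, wordProd_singleton] at e3 ⊢
    rw [← mul_assoc]
    rcases cs.length_mul_simple (w * cs.wordProd ω) i with hl | hl
    · omega
    · exfalso
      obtain ⟨ρ, hρ, rfl⟩ := cs.exists_isReduced w
      rw [← wordProd_append] at hl
      obtain ⟨k, hk, hk'⟩ := exchange cs (ρ ++ ω) i (by omega)
      rcases Nat.lt_or_ge k ρ.length with hlt | hge
      · rw [List.eraseIdx_append_of_lt_length hlt, wordProd_append, wordProd_append] at hk'
        have h5 : cs.wordProd (ρ.eraseIdx k) =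
            cs.wordProd ρ * (cs.wordProd ω * cs.simple i * (cs.wordProd ω)⁻¹) := by
          rw [eq_comm, ← mul_assoc, ← mul_assoc, hk']; group
        have h6 := h _ (mul_mem (mul_mem hω (simple_mem cs hi)) (inv_mem hω))
        rw [← h5, hρ.eq] at h6
        have h7 := cs.length_wordProd_le (ρ.eraseIdx k)
        rw [List.length_eraseIdx_of_lt hlt] at h7
        omega
      · rw [List.eraseIdx_append_of_length_le hge, wordProd_append, wordProd_append, mul_assoc] at hk'
        have h5 := mul_left_cancel hk'
        rw [h5] at e3
        have h7 := cs.length_wordProd_le (ω.eraseIdx (k - ρ.length))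
        have h8 := List.length_eraseIdx_le ω (k - ρ.length)
        rw [hr.eq] at e3
        omega

lemma exists_min (K : Set B) (w : W) : ∃ x y, w = x * y ∧ y ∈ parab cs K ∧
    ∀ v ∈ parab cs K, cs.length x ≤ cs.length (x * v) := by
  classical
  have hex : ∃ n, ∃ y ∈ parab cs K, cs.length (w * y) = n := ⟨_, 1, one_mem _, rfl⟩
  obtain ⟨y, hy, hn⟩ := Nat.find_spec hex
  refine ⟨w * y, y⁻¹, by simp, inv_mem hy, ?_⟩
  intro v hv
  rw [hn]
  exact Nat.find_min' hex ⟨y * v, mul_mem hy hv, by rw [mul_assoc]⟩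

lemma rmin_of_min {K : Set B} {w : W} (h : ∀ v ∈ parab cs K, cs.length w ≤ cs.length (w * v)) :
    RMin cs K w := by
  intro k hk
  rw [add_of_min cs h (simple_mem cs hk)]; simp

lemma RMin.add {K : Set B} {w : W} (h : RMin cs K w) {u : W} (hu : u ∈ parab cs K) :
    cs.length (w * u) = cs.length w + cs.length u := by
  obtain ⟨x, y, rfl, hy, hx⟩ := exists_min cs K w
  obtain ⟨ω, h1, rfl, h3⟩ := exists_red cs hy
  rcases List.eq_nil_or_concat ω with rfl | ⟨τ, i, rfl⟩
  · simp only [wordProd_nil, mul_one]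
    exact add_of_min cs hx hu
  · exfalso
    have hi : i ∈ K := h1 i (by simp)
    have := h i hi
    rw [mul_assoc, add_of_min cs hx hy, add_of_min cs hx (mul_mem hy (simple_mem cs hi))] at this
    rw [h3.eq] at this
    simp only [List.concat_eq_append, wordProd_append, wordProd_singleton,
      simple_mul_simple_cancel_right, List.length_append, List.length_singleton] at this
    have := cs.length_wordProd_le τ
    omega

lemma LMin.add {K : Set B} {w : W} (h : LMin cs K w) {u : W} (hu : u ∈ parab cs K) :
    cs.length (u * w) = cs.length u + cs.length w := by
  have := RMin.add cs ((lmin_iff cs).mp h) (inv_mem hu)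
  rw [← mul_inv_rev, cs.length_inv, cs.length_inv, cs.length_inv] at this
  omega

lemma RMin.eq_one {K : Set B} {w : W} (h : RMin cs K w) (hw : w ∈ parab cs K) : w = 1 := by
  have := RMin.add cs h (inv_mem hw)
  rw [mul_inv_cancel, length_one] at this
  exact cs.length_eq_zero_iff.mp (by omega)

lemma rmin_disj {K K' : Set B} (hd : Disjoint K K') {u : W} (hu : u ∈ parab cs K) :
    RMin cs K' u := by
  intro k hk
  by_contra hn
  obtain ⟨ω, h1, rfl⟩ := exists_word cs hu
  have hne := cs.length_mul_simple_ne (cs.wordProd ω) k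
  obtain ⟨r, hr, hr'⟩ := exchange cs ω k (by omega)
  have : cs.simple k ∈ parab cs K := by
    have h2 : cs.simple k = (cs.wordProd ω)⁻¹ * cs.wordProd (ω.eraseIdx r) := by
      rw [← hr']; simp
    rw [h2]
    exact mul_mem (inv_mem hu) (word_mem cs _ (fun j hj => h1 j (List.mem_of_mem_eraseIdx hj)))
  exact Set.disjoint_left.mp hd (mem_of_simple_mem cs this) hk

lemma inter_trivial {K K' : Set B} (hd : Disjoint K K') {u : W} (hu : u ∈ parab cs K)
    (hu' : u ∈ parab cs K') : u = 1 := (rmin_disj cs hd hu).eq_one cs hu'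

/-- Deodhar's lemma. -/
lemma deodhar {K : Set B} {x : W} (hx : RMin cs K x) (i : B)
    (hn : ¬ RMin cs K (cs.simple i * x)) : ∃ j ∈ K, cs.simple i * x = x * cs.simple j := by
  unfold RMin at hn
  push Not at hn
  obtain ⟨j, hj, hl⟩ := hn
  refine ⟨j, hj, ?_⟩
  have h1 := hx j hj
  have h2 := cs.length_mul_simple x j
  have h3 := cs.length_simple_mul x i
  have h4 := cs.length_simple_mul (x * cs.simple j) i
  have h5 := cs.length_mul_simple (cs.simple i * x) j
  rw [← mul_assoc] at h4
  obtain ⟨ρ, hρ, rfl⟩ := cs.exists_isReduced x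
  rw [← wordProd_cons] at *
  obtain ⟨k, hk, hk'⟩ := exchange cs (i :: ρ) j (by omega)
  rcases k with _ | k
  · simp only [List.eraseIdx_zero, List.tail_cons] at hk'
    rw [← hk']; simp
  · exfalso
    simp only [List.eraseIdx_cons_succ, wordProd_cons, mul_assoc] at hk'
    have h6 := mul_left_cancel hk'
    rw [h6] at h1
    have h7 := cs.length_wordProd_le (ρ.eraseIdx k)
    have h8 := List.length_eraseIdx_le ρ k
    rw [hρ.eq] at h1
    omega

lemma conj_mem {E : Set B} {H : Subgroup W} {g : W} (h : ∀ q ∈ E, g * cs.simple q * g⁻¹ ∈ H)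
    {u : W} (hu : u ∈ parab cs E) : g * u * g⁻¹ ∈ H := by
  have : parab cs E ≤ H.comap (MulAut.conj g).toMonoidHom := by
    unfold parab
    rw [Subgroup.closure_le]
    rintro _ ⟨q, hq, rfl⟩
    simpa using h q hq
  simpa using this hu

lemma commute_of {K K' : Set B}
    (h : ∀ k ∈ K, ∀ k' ∈ K', cs.simple k * cs.simple k' = cs.simple k' * cs.simple k)
    {u v : W} (hu : u ∈ parab cs K) (hv : v ∈ parab cs K') : u * v = v * u := by
  have h1 : ∀ k ∈ K, v * cs.simple k = cs.simple k * v := by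
    intro k hk
    have : parab cs K' ≤ Subgroup.centralizer {cs.simple k} := by
      unfold parab
      rw [Subgroup.closure_le]
      rintro _ ⟨q, hq, rfl⟩
      simp only [SetLike.mem_coe, Subgroup.mem_centralizer_singleton_iff]
      exact (h k hk q hq).symm
    exact Subgroup.mem_centralizer_singleton_iff.mp (this hv)
  have : parab cs K ≤ Subgroup.centralizer {v} := by
    unfold parab
    rw [Subgroup.closure_le]
    rintro _ ⟨q, hq, rfl⟩
    simp only [SetLike.mem_coe, Subgroup.mem_centralizer_singleton_iff]
    exact (h1 q hq).symm
  exact Subgroup.mem_centralizer_singleton_iff.mp (this hu)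

lemma split_union {K K' : Set B}
    (h : ∀ k ∈ K, ∀ k' ∈ K', cs.simple k * cs.simple k' = cs.simple k' * cs.simple k)
    {u : W} (hu : u ∈ parab cs (K ∪ K')) :
    ∃ a ∈ parab cs K, ∃ b ∈ parab cs K', u = a * b := by
  induction hu using Subgroup.closure_induction with
  | mem x hx =>
    obtain ⟨k, hk | hk, rfl⟩ := hx
    · exact ⟨_, simple_mem cs hk, 1, one_mem _, by simp⟩
    · exact ⟨1, one_mem _, _, simple_mem cs hk, by simp⟩
  | one => exact ⟨1, one_mem _, 1, one_mem _, by simp⟩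
  | mul x y _ _ hx hy =>
    obtain ⟨a, ha, b, hb, rfl⟩ := hx
    obtain ⟨a', ha', b', hb', rfl⟩ := hy
    refine ⟨a * a', mul_mem ha ha', b * b', mul_mem hb hb', ?_⟩
    have := commute_of cs h ha' hb
    rw [mul_assoc, ← mul_assoc b, ← this]; simp [mul_assoc]
  | inv x _ hx =>
    obtain ⟨a, ha, b, hb, rfl⟩ := hx
    refine ⟨a⁻¹, inv_mem ha, b⁻¹, inv_mem hb, ?_⟩
    rw [mul_inv_rev]
    exact (commute_of cs h (inv_mem ha) (inv_mem hb)).symm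

lemma dcos_aux {Q J : Set B} {w : W} (hL : LMin cs Q w) (hR : RMin cs J w)
    (ω : List B) (hω : ∀ k ∈ ω, k ∈ Q)
    (hred : cs.IsReduced ω)
    (hm : RMin cs {q ∈ Q | ∃ j ∈ J, cs.simple q * w = w * cs.simple j} (cs.wordProd ω)) :
    RMin cs J (cs.wordProd ω * w) := by
  induction ω with
  | nil => simpa using hR
  | cons i ω ih =>
    have hred' : cs.IsReduced ω := by simpa using hred.drop 1
    have hω' : ∀ k ∈ ω, k ∈ Q := fun k hk => hω k (by simp [hk])
    have ih' := ih hω' hred' (by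
      intro k hk
      have h1 := hm k hk
      rw [hred.eq, wordProd_cons, mul_assoc] at h1
      rw [hred'.eq]
      have := cs.length_simple_mul (cs.wordProd ω * cs.simple k) i
      simp at h1
      have h2 := cs.length_mul_simple (cs.wordProd ω) k
      rw [hred'.eq] at h2
      omega)
    rw [wordProd_cons, mul_assoc]
    by_contra hn
    obtain ⟨j, hj, he⟩ := deodhar cs ih' i hn
    have hωQ := word_mem cs ω hω'
    have hr : (cs.wordProd ω)⁻¹ * cs.simple i * cs.wordProd ω ∈ parab cs Q :=
      mul_mem (mul_mem (inv_mem hωQ) (simple_mem cs (hω i (by simp)))) hωQ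
    have he' : (cs.wordProd ω)⁻¹ * cs.simple i * cs.wordProd ω * w = w * cs.simple j := by
      rw [mul_assoc, mul_assoc, he]; group
    have h1 := LMin.add cs hL hr
    rw [he', RMin.add cs hR (simple_mem cs hj), length_simple] at h1
    obtain ⟨q, hq⟩ := cs.length_eq_one_iff.mp (show cs.length
      ((cs.wordProd ω)⁻¹ * cs.simple i * cs.wordProd ω) = 1 by omega)
    rw [hq] at hr he'
    have h2 := hm q ⟨mem_of_simple_mem cs hr, j, hj, he'⟩
    rw [← hq, wordProd_cons] at h2
    have h3 : cs.simple i * cs.wordProd ω * ((cs.wordProd ω)⁻¹ * cs.simple i * cs.wordProd ω) =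
        cs.wordProd ω := by simp [mul_assoc]
    rw [h3, ← wordProd_cons, hred.eq, hred'.eq] at h2
    simp at h2

lemma dcos {Q J : Set B} {w : W} (hL : LMin cs Q w) (hR : RMin cs J w) {h : W}
    (hh : h ∈ parab cs Q) : ∃ h1 ∈ parab cs Q,
      ∃ e ∈ parab cs {q ∈ Q | ∃ j ∈ J, cs.simple q * w = w * cs.simple j},
      h = h1 * e ∧ RMin cs J (h1 * w) := by
  obtain ⟨x, y, rfl, hy, hx⟩ := exists_min cs
    {q ∈ Q | ∃ j ∈ J, cs.simple q * w = w * cs.simple j} h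
  have hyQ : y ∈ parab cs Q := parab_mono cs (fun q hq => hq.1) hy
  have hxQ : x ∈ parab cs Q := by simpa using mul_mem hh (inv_mem hyQ)
  refine ⟨x, hxQ, y, hy, rfl, ?_⟩
  obtain ⟨ω, h1, rfl, h3⟩ := exists_red cs hxQ
  exact dcos_aux cs hL hR ω h1 h3 (rmin_of_min cs hx)

lemma dcos_conj {Q J : Set B} {w e : W}
    (he : e ∈ parab cs {q ∈ Q | ∃ j ∈ J, cs.simple q * w = w * cs.simple j}) :
    w⁻¹ * e * w ∈ parab cs {j ∈ J | ∃ q ∈ Q, cs.simple q * w = w * cs.simple j} := by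
  have := conj_mem cs (g := w⁻¹)
    (H := parab cs {j ∈ J | ∃ q ∈ Q, cs.simple q * w = w * cs.simple j}) (by
    rintro q ⟨hq, j, hj, hqj⟩
    have : w⁻¹ * cs.simple q * w⁻¹⁻¹ = cs.simple j := by
      rw [inv_inv, mul_assoc, hqj]; group
    rw [this]
    exact simple_mem cs ⟨hj, q, hq, hqj⟩) he
  simpa using this

lemma dmin_unique {P Q : Set B} {m g q : W} (hL : LMin cs P m) (hR : RMin cs Q m)
    (hg : g ∈ parab cs P) (hq : q ∈ parab cs Q) :
    cs.length m ≤ cs.length (g * m * q) ∧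
      (cs.length (g * m * q) ≤ cs.length m → g * m * q = m) := by
  obtain ⟨h1, hh1, e, he, rfl, hmin⟩ := dcos cs hL hR hg
  have he' : m⁻¹ * e * m ∈ parab cs Q := parab_mono cs (fun j hj => hj.1) (dcos_conj cs he)
  have e1 : h1 * e * m * q = h1 * m * (m⁻¹ * e * m * q) := by group
  rw [e1, RMin.add cs hmin (mul_mem he' hq), LMin.add cs hL hh1]
  refine ⟨by omega, fun hle => ?_⟩
  have a1 : h1 = 1 := cs.length_eq_zero_iff.mp (by omega)
  have a2 : m⁻¹ * e * m * q = 1 := cs.length_eq_zero_iff.mp (by omega)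
  rw [a1, a2]; simp

lemma exists_dmin (P Q : Set B) (c : W) : ∃ g ∈ parab cs P, ∃ q ∈ parab cs Q, ∃ m,
    c = g * m * q ∧ LMin cs P m ∧ RMin cs Q m := by
  classical
  have hex : ∃ n, ∃ g ∈ parab cs P, ∃ q ∈ parab cs Q, cs.length (g * c * q) = n :=
    ⟨_, 1, one_mem _, 1, one_mem _, rfl⟩
  obtain ⟨g, hg, q, hq, hn⟩ := Nat.find_spec hex
  refine ⟨g⁻¹, inv_mem hg, q⁻¹, inv_mem hq, g * c * q, by group, ?_, ?_⟩
  · intro k hk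
    have h1 := Nat.find_min' hex
      ⟨cs.simple k * g, mul_mem (simple_mem cs hk) hg, q, hq, rfl⟩
    have h2 := cs.length_simple_mul_ne (g * c * q) k
    simp only [mul_assoc] at *
    omega
  · intro k hk
    have h1 := Nat.find_min' hex
      ⟨g, hg, q * cs.simple k, mul_mem hq (simple_mem cs hk), rfl⟩
    have h2 := cs.length_mul_simple_ne (g * c * q) k
    simp only [mul_assoc] at *
    omega

end Parabolic

section Main

open CoxAux

variable {J₁ J₂}

lemma surj_of (K : Set B) (R : B → B → Prop) (h : ∀ k ∈ K, ∃ j ∈ K, R k j)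
    (hinj : ∀ k k' j, R k j → R k' j → k = k') : ∀ j ∈ K, ∃ k ∈ K, R k j := by
  choose! f hf hR using h
  intro j hj
  have hi : Function.Injective (fun k : K => (⟨f k, hf k k.2⟩ : K)) := by
    intro a b hab
    have hab' : f a = f b := congrArg Subtype.val hab
    have h1 := hR a a.2
    rw [hab'] at h1
    exact Subtype.ext (hinj _ _ _ h1 (hR b b.2))
  obtain ⟨k, hk⟩ := Finite.injective_iff_surjective.mp hi ⟨j, hj⟩
  refine ⟨k, k.2, ?_⟩
  have h2 : f k = j := congrArg Subtype.val hk
  rw [← h2]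
  exact hR k k.2

lemma iset_sub (w : W) : Iset cs J₁ w ⊆ J₁ := by
  rintro i ⟨K, hK, hi⟩
  exact hK.1 hi

lemma sub_iset {w : W} {K : Set B} (hK : WSpecial cs J₁ w K) : K ⊆ Iset cs J₁ w :=
  fun _ hk => ⟨K, hK, hk⟩

lemma iset_fwd {w : W} {i : B} (hi : i ∈ Iset cs J₁ w) :
    ∃ i' ∈ Iset cs J₁ w, w * cs.simple i * w⁻¹ = cs.simple i' := by
  obtain ⟨K, hK, hi⟩ := hi
  obtain ⟨j, hj, h⟩ := hK.2 i hi
  exact ⟨j, ⟨K, hK, hj⟩, h⟩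

lemma conj_inj {w : W} {i j k : B} (h : w * cs.simple i * w⁻¹ = cs.simple k)
    (h' : w * cs.simple j * w⁻¹ = cs.simple k) : i = j := by
  apply simple_inj cs
  have := h.trans h'.symm
  simpa using this

lemma iset_bwd {w : W} {i' : B} (hi : i' ∈ Iset cs J₁ w) :
    ∃ i ∈ Iset cs J₁ w, w * cs.simple i * w⁻¹ = cs.simple i' :=
  surj_of _ (fun i i' => w * cs.simple i * w⁻¹ = cs.simple i')
    (fun _ hk => iset_fwd cs hk) (fun _ _ _ h h' => conj_inj cs h h') i' hi

lemma iset_conj {w u : W} (hu : u ∈ parab cs (Iset cs J₁ w)) :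
    w⁻¹ * u * w ∈ parab cs (Iset cs J₁ w) := by
  have := conj_mem cs (g := w⁻¹) (H := parab cs (Iset cs J₁ w)) (by
    intro q hq
    obtain ⟨i, hi, h⟩ := iset_bwd cs hq
    rw [← h]
    have : w⁻¹ * (w * cs.simple i * w⁻¹) * w⁻¹⁻¹ = cs.simple i := by group
    rw [this]
    exact simple_mem cs hi) hu
  simpa using this

lemma iset_le {w w1 : W} (h : ∀ i ∈ Iset cs J₁ w,
    w1 * cs.simple i * w1⁻¹ = w * cs.simple i * w⁻¹) : Iset cs J₁ w ⊆ Iset cs J₁ w1 := by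
  apply sub_iset cs
  refine ⟨iset_sub cs w, fun k hk => ?_⟩
  obtain ⟨j, hj, h'⟩ := iset_fwd cs hk
  exact ⟨j, hj, (h k hk).trans h'⟩

lemma orb_refl (x : W) : x ∈ orbAct cs J₁ J₂ x :=
  ⟨1, one_mem _, 1, one_mem _, 1, one_mem _, by simp⟩

section

lemma orb_symm (hcomm : ∀ j₁ ∈ J₁, ∀ j₂ ∈ J₂,
      cs.simple j₁ * cs.simple j₂ = cs.simple j₂ * cs.simple j₁)
    {x y : W} (h : y ∈ orbAct cs J₁ J₂ x) : x ∈ orbAct cs J₁ J₂ y := by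
  obtain ⟨a, ha, b, hb, c, hc, rfl⟩ := h
  refine ⟨a⁻¹, inv_mem ha, b⁻¹, inv_mem hb, c⁻¹, inv_mem hc, ?_⟩
  have h1 := commute_of cs hcomm (inv_mem hc) (inv_mem ha)
  have h2 := commute_of cs hcomm hc hb
  rw [← h1]
  have : c⁻¹ * a⁻¹ * (a * c * x * c⁻¹ * b⁻¹) * c⁻¹⁻¹ * b⁻¹⁻¹ = x * (c⁻¹ * (b⁻¹ * (c * b))) := by
    group
  rw [this, h2]; group

lemma orb_trans (hcomm : ∀ j₁ ∈ J₁, ∀ j₂ ∈ J₂,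
      cs.simple j₁ * cs.simple j₂ = cs.simple j₂ * cs.simple j₁)
    {x y z : W} (h : y ∈ orbAct cs J₁ J₂ x) (h' : z ∈ orbAct cs J₁ J₂ y) :
    z ∈ orbAct cs J₁ J₂ x := by
  obtain ⟨a, ha, b, hb, c, hc, rfl⟩ := h
  obtain ⟨a', ha', b', hb', c', hc', rfl⟩ := h'
  refine ⟨a' * a, mul_mem ha' ha, b' * b, mul_mem hb' hb, c' * c, mul_mem hc' hc, ?_⟩
  have h1 := commute_of cs hcomm hc' ha
  have h2 := commute_of cs hcomm (inv_mem hc') (inv_mem hb)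
  calc a' * c' * (a * c * x * c⁻¹ * b⁻¹) * c'⁻¹ * b'⁻¹
      = a' * (c' * a) * c * x * c⁻¹ * (b⁻¹ * c'⁻¹) * b'⁻¹ := by group
    _ = _ := by rw [h1, ← h2]; group

lemma orb_eq (hcomm : ∀ j₁ ∈ J₁, ∀ j₂ ∈ J₂,
      cs.simple j₁ * cs.simple j₂ = cs.simple j₂ * cs.simple j₁)
    {x y : W} (h : y ∈ orbAct cs J₁ J₂ x) : orbAct cs J₁ J₂ x = orbAct cs J₁ J₂ y := by
  ext z
  exact ⟨fun hz => orb_trans cs hcomm (orb_symm cs hcomm h) hz, fun hz => orb_trans cs hcomm h hz⟩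

end

/-- The statement to be proved by induction on the length of `w`. -/
def PP (J₁ J₂ : Set B) (w : W) : Prop :=
  ∀ v ∈ parab cs (Iset cs J₁ w), ∀ v' ∈ parab cs (Iset cs J₁ w),
      w * v' ∈ orbAct cs J₁ J₂ (w * v) → AdTwConj cs J₁ w v v'

/-- The left analogue of the sequence `Kseq`. -/
def Lseq (J₁ J₂ : Set B) (w : W) : ℕ → Set B
  | 0 => J₂
  | n + 1 => {l ∈ J₁ | ∃ k ∈ Lseq J₁ J₂ w n, w * cs.simple l = cs.simple k * w}

section

lemma comm_of_conj (hcomm : ∀ j₁ ∈ J₁, ∀ j₂ ∈ J₂,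
      cs.simple j₁ * cs.simple j₂ = cs.simple j₂ * cs.simple j₁)
    {w s t s' t' : W} (h : w * s = s' * w) (h' : w * t = t' * w)
    (hst : s' * t' = t' * s') : s * t = t * s := by
  have e1 : s = w⁻¹ * s' * w := by rw [mul_assoc, ← h]; group
  have e2 : t = w⁻¹ * t' * w := by rw [mul_assoc, ← h']; group
  calc s * t = w⁻¹ * (s' * t') * w := by rw [e1, e2]; group
    _ = t * s := by rw [hst, e1, e2]; group

lemma lseq_comm_iset (hcomm : ∀ j₁ ∈ J₁, ∀ j₂ ∈ J₂,
      cs.simple j₁ * cs.simple j₂ = cs.simple j₂ * cs.simple j₁)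
    (w : W) (n : ℕ) : ∀ l ∈ Lseq cs J₁ J₂ w n, ∀ i ∈ Iset cs J₁ w,
    cs.simple l * cs.simple i = cs.simple i * cs.simple l := by
  induction n with
  | zero => intro l hl i hi; exact (hcomm i (iset_sub cs w hi) l hl).symm
  | succ n ih =>
    rintro l ⟨hl, k, hk, h⟩ i hi
    obtain ⟨i', hi', h'⟩ := iset_fwd cs hi
    exact comm_of_conj cs hcomm h (by rw [← h']; group) (ih k hk i' hi')

lemma lseq_comm (hcomm : ∀ j₁ ∈ J₁, ∀ j₂ ∈ J₂,
      cs.simple j₁ * cs.simple j₂ = cs.simple j₂ * cs.simple j₁)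
    (w : W) (n : ℕ) : ∀ m, n ≠ m → ∀ l ∈ Lseq cs J₁ J₂ w n,
    ∀ l' ∈ Lseq cs J₁ J₂ w m, cs.simple l * cs.simple l' = cs.simple l' * cs.simple l := by
  induction n with
  | zero =>
    rintro (_ | m) hm l hl l' hl'
    · exact absurd rfl hm
    · exact (hcomm l' hl'.1 l hl).symm
  | succ n ih =>
    rintro (_ | m) hm l hl l' hl'
    · exact hcomm l hl.1 l' hl'
    · obtain ⟨hl, k, hk, h⟩ := hl
      obtain ⟨hl', k', hk', h'⟩ := hl'
      exact comm_of_conj cs hcomm h h' (ih m (by omega) k hk k' hk')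

lemma lseq_sub (hcomm : ∀ j₁ ∈ J₁, ∀ j₂ ∈ J₂,
      cs.simple j₁ * cs.simple j₂ = cs.simple j₂ * cs.simple j₁)
    {w : W} {n : ℕ} {l : B} (hl : l ∈ Lseq cs J₁ J₂ w n) : ∀ m ≤ n,
    Lseq cs J₁ J₂ w m ⊆ Lseq cs J₁ J₂ (cs.simple l * w) m := by
  intro m
  induction m with
  | zero => intro _ x hx; exact hx
  | succ m ih =>
    rintro hm x ⟨hx, k, hk, h⟩
    refine ⟨hx, k, ih (by omega) hk, ?_⟩
    rw [mul_assoc, h, ← mul_assoc, lseq_comm cs hcomm w n m (by omega) l hl k hk, mul_assoc]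

end

lemma lseq_not_iset (hdisj : Disjoint J₁ J₂) (w : W) (n : ℕ) :
    ∀ l ∈ Lseq cs J₁ J₂ w n, l ∉ Iset cs J₁ w := by
  induction n with
  | zero => intro l hl hi; exact Set.disjoint_left.mp hdisj (iset_sub cs w hi) hl
  | succ n ih =>
    rintro l ⟨hl, k, hk, h⟩ hi
    obtain ⟨i', hi', h'⟩ := iset_fwd cs hi
    have : cs.simple k = cs.simple i' := by rw [← h', h]; group
    rw [simple_inj cs this] at hk
    exact ih i' hk hi'

section

lemma PP_of (hcomm : ∀ j₁ ∈ J₁, ∀ j₂ ∈ J₂,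
      cs.simple j₁ * cs.simple j₂ = cs.simple j₂ * cs.simple j₁)
    {w w1 : W} (hI : Iset cs J₁ w1 = Iset cs J₁ w)
    (hA : ∀ u ∈ parab cs (Iset cs J₁ w), w1⁻¹ * u * w1 = w⁻¹ * u * w)
    (ho : ∀ v ∈ parab cs (Iset cs J₁ w), w1 * v ∈ orbAct cs J₁ J₂ (w * v))
    (h : PP cs J₁ J₂ w1) : PP cs J₁ J₂ w := by
  intro v hv v' hv' hh
  obtain ⟨u, hu, e⟩ := h v (hI ▸ hv) v' (hI ▸ hv')
    (orb_trans cs hcomm (orb_symm cs hcomm (ho v hv)) (orb_trans cs hcomm hh (ho v' hv')))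
  rw [hI] at hu
  exact ⟨u, hu, by rw [e, hA u hu]⟩

lemma orb_lseq (hcomm : ∀ j₁ ∈ J₁, ∀ j₂ ∈ J₂,
      cs.simple j₁ * cs.simple j₂ = cs.simple j₂ * cs.simple j₁)
    {w : W} (n : ℕ) : ∀ l ∈ Lseq cs J₁ J₂ w n, ∀ v ∈ parab cs (Iset cs J₁ w),
    cs.simple l * w * v ∈ orbAct cs J₁ J₂ (w * v) := by
  induction n with
  | zero =>
    intro l hl v hv
    exact ⟨cs.simple l, simple_mem cs hl, 1, one_mem _, 1, one_mem _, by simp [mul_assoc]⟩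
  | succ n ih =>
    intro l hl v hv
    have hlv : cs.simple l * v = v * cs.simple l :=
      commute_of cs (lseq_comm_iset cs hcomm w (n+1)) (simple_mem cs hl) hv
    obtain ⟨hl, k, hk, h⟩ := hl
    refine orb_trans cs hcomm (ih k hk v hv) ⟨1, one_mem _, 1, one_mem _, cs.simple l,
      simple_mem cs hl, ?_⟩
    rw [← h]
    have : w * cs.simple l * v = w * v * cs.simple l := by rw [mul_assoc, hlv, mul_assoc]
    rw [this]
    simp [mul_assoc]

lemma step_a (hcomm : ∀ j₁ ∈ J₁, ∀ j₂ ∈ J₂,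
      cs.simple j₁ * cs.simple j₂ = cs.simple j₂ * cs.simple j₁)
    {w : W} {k : B} (hk : k ∈ J₂) (h : PP cs J₁ J₂ (w * cs.simple k)) :
    PP cs J₁ J₂ w := by
  have hc : ∀ i ∈ J₁, (w * cs.simple k) * cs.simple i * (w * cs.simple k)⁻¹ =
      w * cs.simple i * w⁻¹ := by
    intro i hi
    have := hcomm i hi k hk
    rw [mul_assoc w, ← this]
    group
  have hI : Iset cs J₁ (w * cs.simple k) = Iset cs J₁ w :=
    Set.Subset.antisymm (iset_le cs fun i hi => (hc i (iset_sub cs _ hi)).symm)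
      (iset_le cs fun i hi => hc i (iset_sub cs _ hi))
  refine PP_of cs hcomm hI ?_ ?_ h
  · intro u hu
    have h1 := parab_mono cs (iset_sub cs w) (iset_conj cs hu)
    have h2 := commute_of cs hcomm h1 (simple_mem cs hk)
    have : (w * cs.simple k)⁻¹ * u * (w * cs.simple k) =
      (cs.simple k)⁻¹ * ((w⁻¹ * u * w) * cs.simple k) := by group
    rw [this, h2]
    group
  · intro v hv
    have h2 := commute_of cs hcomm (parab_mono cs (iset_sub cs w) hv) (simple_mem cs hk)
    refine ⟨1, one_mem _, cs.simple k, simple_mem cs hk, 1, one_mem _, ?_⟩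
    rw [mul_assoc, ← h2]
    simp [mul_assoc]

lemma step_c (hcomm : ∀ j₁ ∈ J₁, ∀ j₂ ∈ J₂,
      cs.simple j₁ * cs.simple j₂ = cs.simple j₂ * cs.simple j₁)
    {w : W} {n : ℕ} {l : B} (hl : l ∈ Lseq cs J₁ J₂ w n)
    (h : PP cs J₁ J₂ (cs.simple l * w)) : PP cs J₁ J₂ w := by
  have hl' := lseq_sub cs hcomm hl n le_rfl hl
  have hc : ∀ i ∈ Iset cs J₁ w, (cs.simple l * w) * cs.simple i * (cs.simple l * w)⁻¹ =
      w * cs.simple i * w⁻¹ := by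
    intro i hi
    obtain ⟨i', hi', e⟩ := iset_fwd cs hi
    have h2 := lseq_comm_iset cs hcomm w n l hl i' hi'
    have : (cs.simple l * w) * cs.simple i * (cs.simple l * w)⁻¹ =
      cs.simple l * (w * cs.simple i * w⁻¹) * (cs.simple l)⁻¹ := by group
    rw [this, e, h2]
    group
  have hc' : ∀ i ∈ Iset cs J₁ (cs.simple l * w),
      w * cs.simple i * w⁻¹ = (cs.simple l * w) * cs.simple i * (cs.simple l * w)⁻¹ := by
    intro i hi
    obtain ⟨i', hi', e⟩ := iset_fwd cs hi
    have h2 := lseq_comm_iset cs hcomm (cs.simple l * w) n l hl' i' hi'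
    have : w * cs.simple i * w⁻¹ =
      (cs.simple l)⁻¹ * ((cs.simple l * w) * cs.simple i * (cs.simple l * w)⁻¹ * cs.simple l) := by
      group
    rw [this, e, ← h2]
    group
  have hI : Iset cs J₁ (cs.simple l * w) = Iset cs J₁ w :=
    Set.Subset.antisymm (iset_le cs hc') (iset_le cs hc)
  refine PP_of cs hcomm hI ?_ ?_ h
  · intro u hu
    have h2 := commute_of cs (lseq_comm_iset cs hcomm w n) (simple_mem cs hl) hu
    have : (cs.simple l * w)⁻¹ * u * (cs.simple l * w) =
      w⁻¹ * (cs.simple l)⁻¹ * (u * cs.simple l) * w := by group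
    rw [this, ← h2]
    group
  · intro v hv
    exact orb_lseq cs hcomm n l hl v hv

end
lemma len_simple_mul (i : B) (x : W) : cs.length (cs.simple i * x) ≤ cs.length x + 1 ∧
    cs.length x ≤ cs.length (cs.simple i * x) + 1 := by
  have := cs.length_simple_mul x i
  omega

lemma len_mul_simple (i : B) (x : W) : cs.length (x * cs.simple i) ≤ cs.length x + 1 ∧
    cs.length x ≤ cs.length (x * cs.simple i) + 1 := by
  have := cs.length_mul_simple x i
  omega

lemma supp_aux {J : Set B} {w : W} (hw : RMin cs J w) (ω : List B)
    (hlen : cs.length (cs.wordProd ω * w) = ω.length + cs.length w) :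
    ∃ x y, RMin cs J x ∧ y ∈ parab cs J ∧ cs.wordProd ω * w = x * y ∧ cs.length w ≤ cs.length x ∧
      (cs.length x = cs.length w → x = w ∧
        ∀ i ∈ ω, ∃ j ∈ J, cs.simple i * w = w * cs.simple j) := by
  induction ω with
  | nil => exact ⟨w, 1, hw, one_mem _, by simp, le_rfl, fun _ => ⟨rfl, by simp⟩⟩
  | cons i ω ih =>
    rw [wordProd_cons, mul_assoc] at hlen
    have h1 := len_simple_mul cs i (cs.wordProd ω * w)
    have h2 := cs.length_mul_le (cs.wordProd ω) w
    have h3 := cs.length_wordProd_le ω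
    rw [List.length_cons] at hlen
    obtain ⟨x, y, hx, hy, e, hle, hi⟩ := ih (by omega)
    by_cases hr : RMin cs J (cs.simple i * x)
    · have h4 := RMin.add cs hr hy
      have h5 := RMin.add cs hx hy
      rw [e, ← mul_assoc] at hlen
      rw [e] at h2
      refine ⟨cs.simple i * x, y, hr, hy, by rw [wordProd_cons, mul_assoc, e, mul_assoc],
        by omega, fun h => ?_⟩
      omega
    · obtain ⟨t, ht, e'⟩ := deodhar cs hx i hr
      refine ⟨x, cs.simple t * y, hx, mul_mem (simple_mem cs ht) hy, ?_, hle, fun h => ?_⟩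
      · rw [wordProd_cons, mul_assoc, e, ← mul_assoc, e', mul_assoc]
      · obtain ⟨rfl, h'⟩ := hi h
        refine ⟨rfl, fun k hk => ?_⟩
        rcases List.mem_cons.mp hk with rfl | hk
        · exact ⟨t, ht, e'⟩
        · exact h' k hk

lemma map_word {w : W} (f : B → B) (ω : List B)
    (h : ∀ i ∈ ω, cs.simple i * w = w * cs.simple (f i)) :
    cs.wordProd ω * w = w * cs.wordProd (ω.map f) := by
  induction ω with
  | nil => simp
  | cons i ω ih =>
    rw [List.map_cons, wordProd_cons, wordProd_cons, mul_assoc,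
      ih (fun k hk => h k (by simp [hk])), ← mul_assoc, h i (by simp), mul_assoc]

lemma support {w m : W} (hw : RMin cs J₁ w) (hm : m ∈ parab cs J₁) (hc : m * w = w * m) :
    m ∈ parab cs (Iset cs J₁ w) := by
  have key : ∀ ω : List B, cs.wordProd ω = m → cs.IsReduced ω →
      ∀ i ∈ ω, ∃ j ∈ J₁, cs.simple i * w = w * cs.simple j := by
    intro ω hω hr
    have hlen : cs.length (cs.wordProd ω * w) = ω.length + cs.length w := by
      rw [← hr.eq, hω, hc, RMin.add cs hw hm]; omega
    obtain ⟨x, y, hx, hy, e, hle, hi⟩ := supp_aux cs hw ω hlen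
    rw [hω, hc] at e
    have e' : w = x * (y * m⁻¹) := by rw [← mul_assoc, ← e]; group
    have h1 := RMin.add cs hx (mul_mem hy (inv_mem hm))
    rw [← e'] at h1
    exact (hi (by omega)).2
  obtain ⟨τ, hτ, hτm, hτr⟩ := exists_red cs hm
  have hsp : WSpecial cs J₁ w {j | j ∈ J₁ ∧ ∃ ω : List B, (∀ k ∈ ω, k ∈ J₁) ∧
      cs.wordProd ω = m ∧ cs.IsReduced ω ∧ j ∈ ω} := by
    refine ⟨fun j hj => hj.1, ?_⟩
    have := surj_of {j | j ∈ J₁ ∧ ∃ ω : List B, (∀ k ∈ ω, k ∈ J₁) ∧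
      cs.wordProd ω = m ∧ cs.IsReduced ω ∧ j ∈ ω}
      (fun i j => cs.simple i * w = w * cs.simple j) ?_ ?_
    · intro k hk
      obtain ⟨i, hi, e⟩ := this k hk
      exact ⟨i, hi, by rw [← e]; group⟩
    · rintro i ⟨hi, ω, h1, h2, h3, h4⟩
      have h5 := key ω h2 h3
      choose! f hf hfe using h5
      refine ⟨f i, ⟨hf i h4, ω.map f, ?_, ?_, ?_, List.mem_map_of_mem h4⟩, hfe i h4⟩
      · intro k hk
        obtain ⟨a, ha, rfl⟩ := List.mem_map.mp hk
        exact hf a ha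
      · have := map_word cs f ω hfe
        rw [h2, hc] at this
        exact (mul_left_cancel this).symm
      · have := map_word cs f ω hfe
        rw [h2, hc] at this
        unfold CoxeterSystem.IsReduced at *
        rw [← mul_left_cancel this, List.length_map, ← h3, h2]
    · intro k k' j h h'
      exact simple_inj cs (mul_right_cancel (h.trans h'.symm))
  rw [← hτm]
  exact word_mem cs τ (fun k hk => sub_iset cs hsp ⟨hτ k hk, τ, hτ, hτm, hτr, hk⟩)

lemma rmin_union {K K' : Set B} {w : W} (h : RMin cs K w) (h' : RMin cs K' w) :
    RMin cs (K ∪ K') w := by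
  rintro k (hk | hk)
  · exact h k hk
  · exact h' k hk

lemma final (hdisj : Disjoint J₁ J₂) (hcomm : ∀ j₁ ∈ J₁, ∀ j₂ ∈ J₂,
      cs.simple j₁ * cs.simple j₂ = cs.simple j₂ * cs.simple j₁) {w : W}
    (hw1 : RMin cs J₁ w) (hw2 : RMin cs J₂ w) (hL : ∀ n, LMin cs (Lseq cs J₁ J₂ w n) w) :
    PP cs J₁ J₂ w := by
  intro v hv v' hv' ⟨a, ha, b, hb, c, hc, heq⟩
  obtain ⟨I, hI⟩ : ∃ I, I = Iset cs J₁ w := ⟨_, rfl⟩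
  obtain ⟨Q0, hQ0⟩ : ∃ Q0, Q0 = {l | ∃ n, l ∈ Lseq cs J₁ J₂ w n} := ⟨_, rfl⟩
  have hJ2Q : J₂ ⊆ Q0 := by rw [hQ0]; exact fun l hl => ⟨0, hl⟩
  have hIJ : I ⊆ J₁ := hI ▸ iset_sub cs w
  have hQI : ∀ q ∈ Q0, ∀ i ∈ I, cs.simple q * cs.simple i = cs.simple i * cs.simple q := by
    rw [hQ0, hI]
    rintro q ⟨n, hq⟩ i hi
    exact lseq_comm_iset cs hcomm w n q hq i hi
  have hQd : ∀ q ∈ Q0, q ∉ I := by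
    rw [hQ0, hI]
    rintro q ⟨n, hq⟩
    exact lseq_not_iset cs hdisj w n q hq
  have hQL : LMin cs Q0 w := by
    rw [hQ0]
    rintro q ⟨n, hq⟩
    exact hL n q hq
  have hIL : LMin cs I w := by
    intro i hi
    rw [hI] at hi
    obtain ⟨j, hj, e⟩ := iset_bwd cs hi
    have : cs.simple i * w = w * cs.simple j := by rw [← e]; group
    rw [this]
    exact hw1 j (iset_sub cs w hj)
  have hQnext : ∀ q ∈ Q0, ∀ j ∈ J₁, cs.simple q * w = w * cs.simple j → j ∈ Q0 := by
    rw [hQ0]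
    rintro q ⟨n, hq⟩ j hj e
    exact ⟨n + 1, hj, q, hq, e.symm⟩
  have hInext : ∀ q ∈ I, ∀ j, cs.simple q * w = w * cs.simple j → j ∈ I := by
    intro q hq j e
    rw [hI] at hq ⊢
    obtain ⟨j', hj', e'⟩ := iset_bwd cs hq
    have : cs.simple j = cs.simple j' := by
      have : w * cs.simple j = w * cs.simple j' := by rw [← e, ← e']; group
      exact mul_left_cancel this
    rwa [simple_inj cs this]
  have hIprev : ∀ j ∈ I, ∀ q, cs.simple q * w = w * cs.simple j → q ∈ I := by
    intro j hj q e
    rw [hI] at hj ⊢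
    obtain ⟨j', hj', e'⟩ := iset_fwd cs hj
    have : cs.simple q = cs.simple j' := by rw [← e', ← e]; group
    rwa [simple_inj cs this]
  have hIconj : ∀ u ∈ parab cs I, w⁻¹ * u * w ∈ parab cs I := by
    rw [hI]; exact fun u hu => iset_conj cs hu
  have hsupp : ∀ m ∈ parab cs J₁, m * w = w * m → m ∈ parab cs I := by
    rw [hI]; exact fun m hm h => support cs hw1 hm h
  rw [← hI] at hv hv'
  have hwJ : RMin cs (J₁ ∪ J₂) w := rmin_union cs hw1 hw2
  -- the element `c` lies in `W_A`
  obtain ⟨L, hLdef⟩ : ∃ L, L = {l | l ∈ J₁ ∧ l ∈ Q0} := ⟨_, rfl⟩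
  have hLJ : L ⊆ J₁ := by rw [hLdef]; exact fun l hl => hl.1
  have hLQ : L ⊆ Q0 := by rw [hLdef]; exact fun l hl => hl.2
  have hAJ : L ∪ I ⊆ J₁ := Set.union_subset hLJ hIJ
  have hcA : c ∈ parab cs (L ∪ I) := by
    obtain ⟨g, hg, q, hq, m, hcm, hmL, hmR⟩ := exists_dmin cs (L ∪ I) I c
    have hgJ := parab_mono cs hAJ hg
    have hqJ := parab_mono cs hIJ hq
    have hmJ : m ∈ parab cs J₁ := by
      have : m = g⁻¹ * c * q⁻¹ := by rw [hcm]; group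
      rw [this]
      exact mul_mem (mul_mem (inv_mem hgJ) hc) (inv_mem hqJ)
    have hag : (a * g)⁻¹ ∈ parab cs (Q0 ∪ I) := by
      apply inv_mem
      refine mul_mem (parab_mono cs (fun x hx => Or.inl (hJ2Q hx)) ha)
        (parab_mono cs (Set.union_subset_union_left _ hLQ) hg)
    have hQLu : LMin cs (Q0 ∪ I) w := by
      rintro k (hk | hk)
      · exact hQL k hk
      · exact hIL k hk
    obtain ⟨h1, hh1, e, he, hhe, hmin⟩ := dcos cs hQLu hwJ hag
    have he' := dcos_conj cs he
    have he2 : w⁻¹ * e * w ∈ parab cs ((L ∪ I) ∪ J₂) := by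
      refine parab_mono cs ?_ he'
      rintro j ⟨hj1 | hj2, q, hq | hq, hqj⟩
      · left; left; rw [hLdef]; exact ⟨hj1, hQnext q hq j hj1 hqj⟩
      · left; right; exact hInext q hq j hqj
      · right; exact hj2
      · right; exact hj2
    obtain ⟨ea, hea, e2, he2', hee⟩ := split_union cs
      (fun k hk k' hk' => hcomm k (hAJ hk) k' hk') he2
    have hgg : ea * v' * g ∈ parab cs (L ∪ I) :=
      mul_mem (mul_mem hea (parab_mono cs Set.subset_union_right hv')) hg
    have hqq : q * (v⁻¹ * (w⁻¹ * q * w)⁻¹) ∈ parab cs I :=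
      mul_mem hq (mul_mem (inv_mem hv) (inv_mem (hIconj q hq)))
    have hbb : e2 * b ∈ parab cs J₂ := mul_mem he2' hb
    have hcomb : c * b = b * c := commute_of cs hcomm hc hb
    -- main equation
    have hmid : ea * v' * g * m * (q * (v⁻¹ * (w⁻¹ * q * w)⁻¹)) ∈ parab cs J₁ :=
      mul_mem (mul_mem (parab_mono cs hAJ hgg) hmJ) (parab_mono cs hIJ hqq)
    have hrest : v' * c * (v⁻¹ * (w⁻¹ * q * w)⁻¹) ∈ parab cs J₁ :=
      mul_mem (mul_mem (parab_mono cs hIJ hv') hc)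
        (mul_mem (inv_mem (parab_mono cs hIJ hv)) (inv_mem (parab_mono cs hIJ (hIconj q hq))))
    have hmain : m * w = h1 * w * (ea * v' * g * m * (q * (v⁻¹ * (w⁻¹ * q * w)⁻¹)) * (e2 * b)) := by
      have e1 : ea * v' * g * m * (q * (v⁻¹ * (w⁻¹ * q * w)⁻¹)) =
          ea * (v' * c * (v⁻¹ * (w⁻¹ * q * w)⁻¹)) := by rw [hcm]; group
      have e3 := commute_of cs hcomm hrest he2'
      have e4 : v' * c * (v⁻¹ * (w⁻¹ * q * w)⁻¹) * b =
          v' * c * b * (v⁻¹ * (w⁻¹ * q * w)⁻¹) := by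
        have hr2 : v⁻¹ * (w⁻¹ * q * w)⁻¹ ∈ parab cs J₁ :=
          (mul_mem (inv_mem (parab_mono cs hIJ hv)) (inv_mem (parab_mono cs hIJ (hIconj q hq))))
        have := commute_of cs hcomm hr2 hb
        rw [mul_assoc (v' * c), this, mul_assoc (v' * c)]
      calc m * w = (a * g)⁻¹ * (a * (g * m * q) * w * v) * (v⁻¹ * (w⁻¹ * q * w)⁻¹) := by group
        _ = (a * g)⁻¹ * (a * c * (w * v)) * (v⁻¹ * (w⁻¹ * q * w)⁻¹) := by
            rw [← hcm]; simp only [mul_assoc]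
        _ = (a * g)⁻¹ * (w * v' * (b * c)) * (v⁻¹ * (w⁻¹ * q * w)⁻¹) := by
            rw [heq]; congr 2; group
        _ = (a * g)⁻¹ * w * (v' * c * b * (v⁻¹ * (w⁻¹ * q * w)⁻¹)) := by
            rw [← hcomb]; simp only [mul_assoc]
        _ = h1 * w * ((w⁻¹ * e * w) * (v' * c * (v⁻¹ * (w⁻¹ * q * w)⁻¹)) * b) := by
            rw [← e4, hhe]; group
        _ = h1 * w * (ea * (e2 * (v' * c * (v⁻¹ * (w⁻¹ * q * w)⁻¹))) * b) := by
            rw [hee]; simp only [mul_assoc]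
        _ = _ := by rw [← e3, e1]; simp only [mul_assoc]
    have hlen := congrArg cs.length hmain
    rw [RMin.add cs hmin (mul_mem (parab_mono cs Set.subset_union_left hmid)
        (parab_mono cs Set.subset_union_right hbb)), LMin.add cs hQLu hh1,
      RMin.add cs (rmin_disj cs hdisj hmid) hbb] at hlen
    have hle := cs.length_mul_le m w
    obtain ⟨hd1, hd2⟩ := dmin_unique cs hmL hmR hgg hqq
    have hz1 : h1 = 1 := cs.length_eq_zero_iff.mp (by omega)
    have hz2 : e2 * b = 1 := cs.length_eq_zero_iff.mp (by omega)
    rw [hz1, hz2, hd2 (by omega), one_mul, mul_one] at hmain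
    have hmI := hsupp m hmJ hmain
    rw [hcm, hmR.eq_one cs hmI, mul_one]
    exact mul_mem hg (parab_mono cs Set.subset_union_right hq)
  obtain ⟨n, hn, u, hu, hcn⟩ := split_union cs (fun k hk k' hk' => hQI k (hLQ hk) k' hk') hcA
  have hun : n * u = u * n := commute_of cs (fun k hk k' hk' => hQI k (hLQ hk) k' hk') hn hu
  obtain ⟨v1, hv1⟩ : ∃ v1, v1 = (w⁻¹ * u * w) * v * u⁻¹ := ⟨_, rfl⟩
  have hv1I : v1 ∈ parab cs I := by
    rw [hv1]; exact mul_mem (mul_mem (hIconj u hu) hv) (inv_mem hu)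
  have hub := commute_of cs hcomm (parab_mono cs hIJ hu) hb
  have hnv : n * v1 = v1 * n :=
    commute_of cs (fun k hk k' hk' => hQI k (hLQ hk) k' hk') hn hv1I
  have hbv1 := commute_of cs hcomm (inv_mem (parab_mono cs hIJ hv1I)) hb
  have hnb := commute_of cs hcomm (parab_mono cs hLJ hn) hb
  have hbn : b * n ∈ parab cs J₂ ⊔ parab cs J₁ :=
    mul_mem (Subgroup.mem_sup_left hb) (Subgroup.mem_sup_right (parab_mono cs hLJ hn))
  -- `a n w = w (v' v1⁻¹ n b)`
  have hmain : a * n * w = w * (v' * v1⁻¹ * (n * b)) := by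
    have e1 : a * c * (w * v) = w * v' * (b * c) := by rw [heq]; group
    have e2 : a * c * (w * v) = a * n * w * v1 * u := by rw [hcn, hv1]; group
    rw [e2, hcn] at e1
    have e3 : a * n * w = w * v' * (b * (n * u)) * u⁻¹ * v1⁻¹ := by rw [← e1]; group
    rw [e3]
    have e4 : w * v' * (b * (n * u)) * u⁻¹ * v1⁻¹ = w * v' * b * (n * v1⁻¹) := by group
    have e5 : n * v1⁻¹ = v1⁻¹ * n :=
      commute_of cs (fun k hk k' hk' => hQI k (hLQ hk) k' hk') hn (inv_mem hv1I)
    rw [e4, e5, hnb]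
    calc w * v' * b * (v1⁻¹ * n) = w * v' * (b * v1⁻¹) * n := by group
      _ = _ := by rw [← hbv1]; group
  have hanQ : a * n ∈ parab cs Q0 := mul_mem (parab_mono cs hJ2Q ha) (parab_mono cs hLQ hn)
  obtain ⟨h1, hh1, e, he, hhe, hmin⟩ := dcos cs hQL hwJ hanQ
  have he' := dcos_conj cs he
  have heI : w⁻¹ * e * w ∈ parab cs ((J₁ ∪ J₂) \ I) := by
    refine parab_mono cs ?_ he'
    rintro j ⟨hj, q, hq, hqj⟩
    exact ⟨hj, fun hjI => hQd q hq (hIprev j hjI q hqj)⟩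
  have hz : h1 = 1 := by
    have hin : v' * v1⁻¹ * (n * b) * (w⁻¹ * e * w)⁻¹ ∈ parab cs (J₁ ∪ J₂) := by
      refine mul_mem (mul_mem (parab_mono cs Set.subset_union_left
        (mul_mem (parab_mono cs hIJ hv') (inv_mem (parab_mono cs hIJ hv1I)))) (mul_mem ?_ ?_))
        (inv_mem (parab_mono cs Set.sdiff_subset heI))
      · exact parab_mono cs (fun x hx => Or.inl (hLJ hx)) hn
      · exact parab_mono cs Set.subset_union_right hb
    have e1 : h1 * w * (v' * v1⁻¹ * (n * b) * (w⁻¹ * e * w)⁻¹)⁻¹ = w := by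
      have : h1 * w = w * (v' * v1⁻¹ * (n * b)) * (w⁻¹ * e * w)⁻¹ := by
        rw [← hmain, hhe]; group
      rw [this]; group
    have h2 := RMin.add cs hmin (inv_mem hin)
    rw [e1, LMin.add cs hQL hh1] at h2
    exact cs.length_eq_zero_iff.mp (by omega)
  rw [hz, one_mul] at hhe
  have hvv : v' * v1⁻¹ = w⁻¹ * e * w * (n * b)⁻¹ := by
    have : w⁻¹ * (a * n * w) = v' * v1⁻¹ * (n * b) := by rw [hmain]; group
    rw [hhe, ← mul_assoc] at this
    rw [this]; group
  have hone : v' * v1⁻¹ = 1 := by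
    refine inter_trivial cs (K := I) (K' := (J₁ ∪ J₂) \ I) Set.disjoint_sdiff_right
      (mul_mem hv' (inv_mem hv1I)) ?_
    rw [hvv]
    refine mul_mem heI (inv_mem (mul_mem (parab_mono cs ?_ hn) (parab_mono cs ?_ hb)))
    · exact fun x hx => ⟨Or.inl (hLJ hx), hQd x (hLQ hx)⟩
    · exact fun x hx => ⟨Or.inr hx, hQd x (hJ2Q hx)⟩
  refine ⟨u, hI ▸ hu, ?_⟩
  rw [← hv1]
  exact mul_inv_eq_one.mp hone

lemma PP_all (hdisj : Disjoint J₁ J₂) (hcomm : ∀ j₁ ∈ J₁, ∀ j₂ ∈ J₂,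
      cs.simple j₁ * cs.simple j₂ = cs.simple j₂ * cs.simple j₁) (N : ℕ) :
    ∀ w : W, cs.length w = N → RMin cs J₁ w → PP cs J₁ J₂ w := by
  induction N using Nat.strong_induction_on with
  | _ N ih =>
    intro w hN hw
    by_cases h2 : RMin cs J₂ w
    · by_cases h3 : ∀ n, LMin cs (Lseq cs J₁ J₂ w n) w
      · exact final cs hdisj hcomm hw h2 h3
      · unfold LMin at h3
        push Not at h3
        obtain ⟨n, l, hl, hlen⟩ := h3
        have hne := cs.length_simple_mul_ne w l
        refine step_c cs hcomm hl (ih _ (by omega) _ rfl ?_)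
        intro j hj
        have h4 := hw j hj
        have h5 := len_simple_mul cs l (w * cs.simple j)
        rw [mul_assoc]
        omega
    · unfold RMin at h2
      push Not at h2
      obtain ⟨k, hk, hlen⟩ := h2
      have hne := cs.length_mul_simple_ne w k
      refine step_a cs hcomm hk (ih _ (by omega) _ rfl ?_)
      intro j hj
      have h4 := hw j hj
      have h5 := len_mul_simple cs k (w * cs.simple j)
      rw [mul_assoc, ← hcomm j hj k hk, ← mul_assoc]
      omega

end Main

/-- For `w ∈ 𝒲(J₁, J₂)`: `w v` and `w v'` lie in the same
orbit of the `W_{J₂} × W_{J₂} × W_{J₁}`-action iff `v, v'` are `Ad(w)`-twisted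
conjugate in `W_{I(J₁,w)}`; every orbit contained in `W_{J₂} π⁻¹(w) W_{J₂}`
contains some `w v`; hence `v ↦ (orbit of w v)` induces a bijection from the
`Ad(w)`-twisted conjugacy classes of `W_{I(J₁,w)}` onto the orbits contained
in `W_{J₂} π⁻¹(w) W_{J₂}`. -/
theorem stmt12 (hdisj : Disjoint J₁ J₂)
    (hcomm : ∀ j₁ ∈ J₁, ∀ j₂ ∈ J₂,
      cs.simple j₁ * cs.simple j₂ = cs.simple j₂ * cs.simple j₁)
    (w : W) (hw : w ∈ calW cs J₁ J₂) :
    (∀ v ∈ parab cs (Iset cs J₁ w), ∀ v' ∈ parab cs (Iset cs J₁ w),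
      w * v' ∈ orbAct cs J₁ J₂ (w * v) ↔ AdTwConj cs J₁ w v v') ∧
    (∀ x ∈ dSet cs J₁ J₂ w, ∃ v ∈ parab cs (Iset cs J₁ w),
      w * v ∈ orbAct cs J₁ J₂ x) ∧
    (∀ v ∈ parab cs (Iset cs J₁ w), ∀ v' ∈ parab cs (Iset cs J₁ w),
      orbAct cs J₁ J₂ (w * v) = orbAct cs J₁ J₂ (w * v') ↔
        AdTwConj cs J₁ w v v') ∧
    (∀ x ∈ dSet cs J₁ J₂ w, ∃ v ∈ parab cs (Iset cs J₁ w),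
      orbAct cs J₁ J₂ x = orbAct cs J₁ J₂ (w * v)) := by

  have hP : PP cs J₁ J₂ w := PP_all cs hdisj hcomm _ w rfl (rmin_of_min cs hw.1)
  have h1 : ∀ v ∈ parab cs (Iset cs J₁ w), ∀ v' ∈ parab cs (Iset cs J₁ w),
      w * v' ∈ orbAct cs J₁ J₂ (w * v) ↔ AdTwConj cs J₁ w v v' := by
    intro v hv v' hv'
    refine ⟨hP v hv v' hv', ?_⟩
    rintro ⟨u, hu, rfl⟩
    refine ⟨1, one_mem _, 1, one_mem _, u, parab_mono cs (iset_sub cs w) hu, ?_⟩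
    group
  have h2 : ∀ x ∈ dSet cs J₁ J₂ w, ∃ v ∈ parab cs (Iset cs J₁ w),
      w * v ∈ orbAct cs J₁ J₂ x := by
    rintro x ⟨a, ha, b, hb, y, ⟨u, hu, v, hv, rfl⟩, rfl⟩
    refine ⟨v, hv, orb_symm cs hcomm ⟨a, ha, b⁻¹, inv_mem hb, u, hu, ?_⟩⟩
    group
  refine ⟨h1, h2, ?_, ?_⟩
  · intro v hv v' hv'
    rw [← h1 v hv v' hv']
    refine ⟨fun h => ?_, fun h => orb_eq cs hcomm h⟩
    rw [h]
    exact orb_refl cs _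
  · intro x hx
    obtain ⟨v, hv, h⟩ := h2 x hx
    exact ⟨v, hv, orb_eq cs hcomm h⟩

end PartialConjugation
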